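/- Fix a node i, a class c, a learning rate η > 0, and current weights W[t] = (W^{(0)}[t], …, W^{(L)}[t]). Let ε ∈ ℝ^{|B|×C} have rows ε_m = softmax(Z(W[t])_m) - onehot(Y_m) for m ∈ B, and perform the gradient step W^{(l)}[t+1] = W^{(l)}[t] - η ((P_rw^l X)_B)^T ε for every 0 ≤ l ≤ L, where (P_rw^l X)_B is the submatrix of rows of P_rw^l X indexed by B. Define χ^{(l)} ∈ ℝ^{|B|} by (χ^{(l)})_m = Σ_{j,k} (P_rw^l)_{ij} (P_rw^l)_{mk} ⟨X_j, X_k⟩. Then |ℓ(Z(W[t+1])_i, c) - ℓ(Z(W[t])_i, c)| ≤ √2 · η · ‖ε‖_F · Σ_{l=0}^{L} ‖χ^{(l)}‖₂, where ‖·‖_F is the Frobenius norm. -/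

import Mathlib

open Finset

/-- The softmax function on `ℝ^C`. -/
noncomputable def softmax {C : ℕ} (z : Fin C → ℝ) (c : Fin C) : ℝ :=
  Real.exp (z c) / ∑ b, Real.exp (z b)

/-- Cross-entropy loss of logits `z` with respect to class `c`. -/
noncomputable def xent {C : ℕ} (z : Fin C → ℝ) (c : Fin C) : ℝ :=
  - Real.log (softmax z c)

lemma xent_eq_aux {C : ℕ} (z : Fin C → ℝ) (c : Fin C) :
    xent z c = Real.log (∑ b, Real.exp (z b)) - z c := by
  have hpos : 0 < ∑ b, Real.exp (z b) :=
    Finset.sum_pos (fun b _ => Real.exp_pos _) ⟨c, Finset.mem_univ c⟩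
  unfold xent softmax
  rw [Real.log_div (Real.exp_pos _).ne' hpos.ne', Real.log_exp]
  ring

lemma pair_bound_aux {C : ℕ} (δ : Fin C → ℝ) (b c : Fin C) :
    δ b - δ c ≤ Real.sqrt (2 * ∑ q, (δ q) ^ 2) := by
  by_cases h : b = c
  · subst h
    simp
  · apply Real.le_sqrt_of_sq_le
    have h1 : ∑ q ∈ ({b, c} : Finset (Fin C)), (δ q) ^ 2 ≤ ∑ q, (δ q) ^ 2 :=
      Finset.sum_le_sum_of_subset_of_nonneg (Finset.subset_univ _)
        (fun _ _ _ => sq_nonneg _)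
    rw [Finset.sum_pair h] at h1
    nlinarith [sq_nonneg (δ b + δ c)]

lemma xent_diff_aux {C : ℕ} (z w : Fin C → ℝ) (c : Fin C) :
    xent w c - xent z c ≤ Real.sqrt (2 * ∑ q, (w q - z q) ^ 2) := by
  rw [xent_eq_aux, xent_eq_aux]
  set K := Real.sqrt (2 * ∑ q, (w q - z q) ^ 2) with hK
  have hpos : ∀ z : Fin C → ℝ, 0 < ∑ b, Real.exp (z b) := fun z =>
    Finset.sum_pos (fun b _ => Real.exp_pos _) ⟨c, Finset.mem_univ c⟩
  have h1 : ∑ b, Real.exp (w b) ≤ Real.exp (K + (w c - z c)) * ∑ b, Real.exp (z b) := by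
    rw [Finset.mul_sum]
    apply Finset.sum_le_sum
    intro b _
    rw [← Real.exp_add]
    apply Real.exp_le_exp.2
    have := pair_bound_aux (fun q => w q - z q) b c
    linarith
  have h2 := Real.log_le_log (hpos w) h1
  rw [Real.log_mul (Real.exp_pos _).ne' (hpos z).ne', Real.log_exp] at h2
  linarith

lemma xent_abs_aux {C : ℕ} (z w : Fin C → ℝ) (c : Fin C) :
    |xent w c - xent z c| ≤ Real.sqrt 2 * Real.sqrt (∑ q, (w q - z q) ^ 2) := by
  rw [← Real.sqrt_mul (by norm_num)]
  rw [abs_le]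
  have h1 := xent_diff_aux z w c
  have h2 := xent_diff_aux w z c
  have h3 : ∑ q, (w q - z q) ^ 2 = ∑ q, (z q - w q) ^ 2 :=
    Finset.sum_congr rfl (fun _ _ => by ring)
  rw [← h3] at h2
  constructor <;> linarith

lemma tri_aux {b : ℕ} (s : Finset ℕ) (χ : ℕ → Fin b → ℝ) :
    Real.sqrt (∑ m, (∑ l ∈ s, χ l m) ^ 2) ≤ ∑ l ∈ s, Real.sqrt (∑ m, (χ l m) ^ 2) := by
  have h := norm_sum_le s (fun l => (WithLp.toLp 2 (χ l) : EuclideanSpace ℝ (Fin b)))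
  simpa [EuclideanSpace.norm_eq] using h

lemma chi_aux {N d : ℕ} (Q : Matrix (Fin N) (Fin N) ℝ) (X : Matrix (Fin N) (Fin d) ℝ)
    (i n : Fin N) :
    ∑ p, (Q * X) i p * (Q * X) n p = ∑ j, ∑ k, Q i j * Q n k * ∑ r, X j r * X k r := by
  simp only [Matrix.mul_apply, Finset.sum_mul_sum]
  rw [Finset.sum_comm]
  refine Finset.sum_congr rfl fun j _ => ?_
  rw [Finset.sum_comm]
  refine Finset.sum_congr rfl fun k _ => ?_
  rw [Finset.mul_sum]
  refine Finset.sum_congr rfl fun p _ => ?_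
  ring

/-- Theorem 6, RW training step: after one gradient-descent step on the
batch loss of the linearized RW model, the change in cross-entropy loss at node `i`
is bounded by `√2 · η · ‖ε‖_F · Σ_l ‖χ^{(l)}‖₂`. -/
theorem rw_training_step_bound {N d C b : ℕ} (hC : 2 ≤ C)
    (A : Matrix (Fin N) (Fin N) ℝ)
    (hA01 : ∀ i j, A i j = 0 ∨ A i j = 1)
    (hAsymm : A.IsSymm)
    (deg : Fin N → ℝ) (hdeg : ∀ i, deg i = ∑ j, A i j)
    (hdegpos : ∀ i, 0 < deg i)
    (Prw : Matrix (Fin N) (Fin N) ℝ) (hPrw : ∀ i j, Prw i j = A i j / deg i)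
    (X : Matrix (Fin N) (Fin d) ℝ)
    (idx : Fin b → Fin N) (hidx : Function.Injective idx)
    (Y : Fin b → Fin C)
    (i : Fin N) (c : Fin C) (η : ℝ) (hη : 0 < η) (L : ℕ)
    (Wt : ℕ → Fin d → Fin C → ℝ)
    -- the linearized RW model
    (Zf : (ℕ → Fin d → Fin C → ℝ) → Fin N → Fin C → ℝ)
    (hZf : ∀ W' n c', Zf W' n c' =
      ∑ l ∈ range (L + 1), ∑ p, (Prw ^ l * X) n p * W' l p c')
    -- the residual matrix at step t
    (ε : Fin b → Fin C → ℝ)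
    (hε : ∀ m q, ε m q = softmax (Zf Wt (idx m)) q - (if q = Y m then (1 : ℝ) else 0))
    -- the weights after one gradient step
    (Wt1 : ℕ → Fin d → Fin C → ℝ)
    (hWt1 : ∀ l ≤ L, ∀ p q, Wt1 l p q =
      Wt l p q - η * ∑ m, (Prw ^ l * X) (idx m) p * ε m q)
    -- the expected neighborhood-similarity vectors
    (χ : ℕ → Fin b → ℝ)
    (hχ : ∀ l m, χ l m =
      ∑ j, ∑ k, (Prw ^ l) i j * (Prw ^ l) (idx m) k * ∑ r, X j r * X k r) :
    |xent (Zf Wt1 i) c - xent (Zf Wt i) c| ≤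
      Real.sqrt 2 * η * Real.sqrt (∑ m, ∑ q, (ε m q) ^ 2) *
        ∑ l ∈ range (L + 1), Real.sqrt (∑ m, (χ l m) ^ 2) := by
  have hδ : ∀ q, Zf Wt1 i q - Zf Wt i q
      = -η * ∑ m, (∑ l ∈ range (L + 1), χ l m) * ε m q := by
    intro q
    rw [hZf, hZf, ← Finset.sum_sub_distrib]
    simp only [Finset.sum_mul]
    rw [Finset.sum_comm, Finset.mul_sum]
    refine Finset.sum_congr rfl fun l hl => ?_
    have hl' : l ≤ L := Nat.lt_succ_iff.1 (Finset.mem_range.1 hl)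
    rw [← Finset.sum_sub_distrib]
    simp only [hχ, ← chi_aux, hWt1 l hl', Finset.sum_mul]
    rw [Finset.sum_comm, Finset.mul_sum]
    refine Finset.sum_congr rfl fun p _ => ?_
    simp only [mul_assoc]
    rw [← Finset.mul_sum]
    ring
  refine (xent_abs_aux _ _ c).trans ?_
  have hmain : ∑ q, (Zf Wt1 i q - Zf Wt i q) ^ 2 ≤
      η ^ 2 * ((∑ m, ∑ q, (ε m q) ^ 2) * ∑ m, (∑ l ∈ range (L + 1), χ l m) ^ 2) := by
    rw [Finset.sum_comm, Finset.sum_mul, Finset.mul_sum]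
    refine Finset.sum_le_sum fun q _ => ?_
    rw [hδ, mul_pow, neg_sq]
    refine mul_le_mul_of_nonneg_left ?_ (sq_nonneg _)
    rw [mul_comm (∑ m, (ε m q) ^ 2)]
    exact Finset.sum_mul_sq_le_sq_mul_sq _ _ _
  have h2 := Real.sqrt_le_sqrt hmain
  rw [Real.sqrt_mul (sq_nonneg _), Real.sqrt_sq hη.le,
    Real.sqrt_mul (Finset.sum_nonneg fun _ _ => Finset.sum_nonneg fun _ _ => sq_nonneg _)] at h2
  have h3 := tri_aux (range (L + 1)) χ
  rw [mul_assoc, mul_assoc]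
  refine mul_le_mul_of_nonneg_left (h2.trans ?_) (Real.sqrt_nonneg _)
  gcongr
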